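/- arXiv:2403.17669 — 2 statements merged into one kernel-verified Lean document; each statement's English description precedes it below -/
import Mathlib

section
/- Let d ≥ 2 and k ≥ 1 be integers. There exists a constant C = C(k, d) such that for every x ∈ 𝕊^k and every t ≥ 0: if d = 2 then Σ_{y ∈ 𝕊^k} |p_t^{rw}(x,y) − p_t^ℓ(x,y)| ≤ C log(t+2) / (√t + 1), and if d ≥ 3 then Σ_{y ∈ 𝕊^k} |p_t^{rw}(x,y) − p_t^ℓ(x,y)| ≤ C / (√t + 1). -/
open scoped Classical

noncomputable section

namespace SSEPPaper

/-- Configurations of `k` labelled particles on `ℤ^d`. -/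
abbrev Conf (d k : ℕ) := Fin k → Fin d → ℤ

/-- Euclidean norm of an integer vector in `ℤ^d`. -/
def vnorm {d : ℕ} (v : Fin d → ℤ) : ℝ := Real.sqrt (∑ j, ((v j : ℝ)) ^ 2)

/-- Euclidean norm on `(ℝ^d)^k` of an integer configuration. -/
def cnorm {d k : ℕ} (x : Conf d k) : ℝ := Real.sqrt (∑ i, ∑ j, ((x i j : ℝ)) ^ 2)

/-- The set `𝕊^k` of configurations with pairwise distinct particle positions. -/
def SSet (d k : ℕ) : Set (Conf d k) := {x | ∀ i j : Fin k, i ≠ j → x i ≠ x j}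

/-- Swap of the coordinates `i` and `j` of a configuration, i.e. `σ^{i,j}x`. -/
def cswap {d k : ℕ} (i j : Fin k) (x : Conf d k) : Conf d k := x ∘ Equiv.swap i j

/-- `δ^{i,j}w`: the configuration which agrees with `w` except that its `j`-th coordinate
is replaced by `w i`. -/
def cdelta {d k : ℕ} (i j : Fin k) (w : Conf d k) : Conf d k := Function.update w j (w i)

/-- Kronecker delta function at `y`. -/
def deltaFn {α : Type*} (y : α) : α → ℝ := fun x => if x = y then 1 else 0

/-- Generator of the labelled exclusion process, extended to all of `(ℤ^d)^k`. -/
def Lexc {d k : ℕ} (f : Conf d k → ℝ) : Conf d k → ℝ := fun x =>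
  (∑' y : Conf d k, if cnorm (y - x) = 1 ∧ y ∈ SSet d k then f y - f x else 0) +
    ∑ i : Fin k, ∑ j : Fin k,
      if i < j ∧ vnorm (x i - x j) = 1 ∧ x ∈ SSet d k then f (cswap i j x) - f x else 0

/-- Generator of `k` independent simple random walks on `ℤ^d`. -/
def Lrw {d k : ℕ} (f : Conf d k → ℝ) : Conf d k → ℝ := fun x =>
  ∑' z : Conf d k, if cnorm (z - x) = 1 then f z - f x else 0

/-- Generator (discrete Laplacian) of a single simple random walk on `ℤ^d`. -/
def Lap {d : ℕ} (f : (Fin d → ℤ) → ℝ) : (Fin d → ℤ) → ℝ := fun x =>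
  ∑' y : Fin d → ℤ, if vnorm (y - x) = 1 then f y - f x else 0

/-- Transition probabilities `p_t^ℓ(x,y) = (e^{tL^ℓ} δ_y)(x)` of the labelled exclusion
process, given by the exponential power series of the generator. -/
def ptl {d k : ℕ} (t : ℝ) (x y : Conf d k) : ℝ :=
  ∑' n : ℕ, t ^ n / n.factorial * ((Lexc (d := d) (k := k))^[n] (deltaFn y)) x

/-- Transition probabilities `p_t^{rw}(x,y) = (e^{tL^{rw}} δ_y)(x)` of `k` independent
simple random walks on `ℤ^d`. -/
def ptrw {d k : ℕ} (t : ℝ) (x y : Conf d k) : ℝ :=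
  ∑' n : ℕ, t ^ n / n.factorial * ((Lrw (d := d) (k := k))^[n] (deltaFn y)) x

/-- Transition probabilities `p_t(x,y) = (e^{tΔ} δ_y)(x)` of a single continuous-time
simple random walk on `ℤ^d`. -/
def pt1 {d : ℕ} (t : ℝ) (x y : Fin d → ℤ) : ℝ :=
  ∑' n : ℕ, t ^ n / n.factorial * ((Lap (d := d))^[n] (deltaFn y)) x

/-- The configuration `e₁₁ = ((1,0,…,0),(0,…,0),…,(0,…,0))`. -/
def e11 (d k : ℕ) : Conf d k := fun i j => if i.val = 0 ∧ j.val = 0 then 1 else 0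

/-!
By Duhamel's formula the difference of the two semigroups at time `t`, applied to `f`, is the
integral over `s ∈ [0, t]` of the exclusion semigroup at time `s` applied to the difference of the
generators of the walk semigroup at time `t - s` applied to `f`. On `𝕊^k` the generators differ
only at pairs of adjacent particles, and there by a mixed second difference along two distinct
steps of the walk, which costs a factor `1 / (1 + t - s)`. It remains to see that under the
exclusion process two particles are adjacent at time `s` with probability `O(1 / (1 + s))`.

This is Liggett's comparison. For a function of `x a - x b` that is positive definite, the defect
between the generators is nonnegative, because `f v + f (-v) ≤ 2 * f 0`; the walk preserves such
functions, so Duhamel's formula bounds their exclusion expectation by their walk expectation. The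
indicator of `x a = x b` is positive definite, and applying the walk generator plus a large enough
multiple of the identity to it gives a positive-definite majorant of the indicator of adjacency. In
dimension at least two the indicator of `x a = x b` is itself a mixed second difference of a bounded
function, the indicator of a quadrant, whence the decay. Finally
`∫ s in 0..t, 1 / ((1 + s) * (1 + t - s)) = 2 * log (1 + t) / (2 + t)`.
-/

open NormedSpace (exp)
open scoped BoundedContinuousFunction

section PoissonWeights

variable {E : Type*} [NormedAddCommGroup E] [NormedSpace ℝ E]

/-- Chen's identity `𝔼[X g(X)] = u 𝔼[g(X + 1)]` for a Poisson variable `X` of parameter `u`,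
without the normalization `e^{-u}`. -/
lemma hasSum_natCast_mul_poisson_smul {u : ℝ} {g : ℕ → E} {a : E}
    (h : HasSum (fun n : ℕ => (u ^ n / n.factorial) • g (n + 1)) a) :
    HasSum (fun n : ℕ => (n * (u ^ n / n.factorial)) • g n) (u • a) := by
  rw [← hasSum_nat_add_iff' 1]
  simp only [Finset.range_one, Finset.sum_singleton, Nat.cast_zero, zero_mul, zero_smul, sub_zero]
  refine (h.const_smul u).congr_fun fun n => ?_
  rw [smul_smul, Nat.factorial_succ]
  congr 1
  push_cast
  field_simp
  rw [pow_succ']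

lemma hasSum_poisson (u : ℝ) : HasSum (fun n : ℕ => u ^ n / n.factorial) (Real.exp u) :=
  Real.exp_eq_exp_ℝ ▸ NormedSpace.expSeries_div_hasSum_exp u

lemma hasSum_natCast_mul_poisson (u : ℝ) :
    HasSum (fun n : ℕ => n * (u ^ n / n.factorial)) (u * Real.exp u) := by
  simpa using hasSum_natCast_mul_poisson_smul (g := fun _ => (1 : ℝ))
    (by simpa using hasSum_poisson u)

lemma hasSum_natCast_sq_mul_poisson (u : ℝ) :
    HasSum (fun n : ℕ => (n : ℝ) ^ 2 * (u ^ n / n.factorial)) ((u ^ 2 + u) * Real.exp u) := by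
  have h := hasSum_natCast_mul_poisson_smul (g := fun n => (n : ℝ))
    (((hasSum_natCast_mul_poisson u).add (hasSum_poisson u)).congr_fun fun n => by
      push_cast; ring)
  rw [show (u ^ 2 + u) * Real.exp u = u • (u * Real.exp u + Real.exp u) by
    rw [smul_eq_mul]; ring]
  exact h.congr_fun fun n => by rw [smul_eq_mul]; ring

lemma hasSum_sq_div_sub_one_mul_poisson {u : ℝ} (hu : u ≠ 0) :
    HasSum (fun n : ℕ => ((n : ℝ) / u - 1) ^ 2 * (u ^ n / n.factorial)) (Real.exp u / u) := by
  have h := (((hasSum_natCast_sq_mul_poisson u).mul_left (u⁻¹ ^ 2)).sub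
    ((hasSum_natCast_mul_poisson u).mul_left (2 * u⁻¹))).add (hasSum_poisson u)
  rw [show Real.exp u / u = u⁻¹ ^ 2 * ((u ^ 2 + u) * Real.exp u) -
    2 * u⁻¹ * (u * Real.exp u) + Real.exp u by field_simp; ring]
  exact h.congr_fun fun n => by ring

end PoissonWeights

section BanachAlgebra

variable {A : Type*} [NormedRing A] [NormedAlgebra ℝ A] [CompleteSpace A]

lemma hasSum_exp_smul (u : ℝ) (a : A) :
    HasSum (fun n : ℕ => (u ^ n / n.factorial) • a ^ n) (exp (u • a)) :=
  (NormedSpace.exp_series_hasSum_exp' (𝕂 := ℝ) (u • a)).congr_fun fun n => by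
    rw [smul_pow, smul_smul, div_eq_inv_mul]

lemma exp_smul_add_of_commute (u : ℝ) {a b : A} (h : Commute a b) :
    exp (u • (a + b)) = exp (u • a) * exp (u • b) := by
  let := NormedAlgebra.restrictScalars ℚ ℝ A
  rw [smul_add, NormedSpace.exp_add_of_commute ((h.smul_left u).smul_right u)]

lemma exp_smul_sub_smul_one (u c : ℝ) (a : A) :
    exp (u • (a - c • (1 : A))) = Real.exp (-(u * c)) • exp (u • a) := by
  have hone : exp (u • (-c) • (1 : A)) = Real.exp (-(u * c)) • 1 := by
    rw [smul_smul, ← Algebra.algebraMap_eq_smul_one, ← NormedSpace.algebraMap_exp_comm,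
      ← Real.exp_eq_exp_ℝ, Algebra.algebraMap_eq_smul_one, mul_neg]
  rw [sub_eq_neg_add, ← neg_smul, exp_smul_add_of_commute _ ((Commute.one_left a).smul_left _),
    hone, smul_one_mul]

lemma exp_smul_sub_one (u : ℝ) (a : A) :
    exp (u • (a - 1)) = Real.exp (-u) • exp (u • a) := by
  simpa using exp_smul_sub_smul_one u 1 a

lemma hasSum_sub_one_mul_exp_smul {u : ℝ} (hu : u ≠ 0) (a : A) :
    HasSum (fun n : ℕ => ((n / u - 1) * (u ^ n / n.factorial)) • a ^ n)
      ((a - 1) * exp (u • a)) := by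
  have hmul : HasSum (fun n : ℕ => (n * (u ^ n / n.factorial)) • a ^ n) (u • (a * exp (u • a))) :=
    hasSum_natCast_mul_poisson_smul (((hasSum_exp_smul u a).mul_left a).congr_fun fun n => by
      rw [mul_smul_comm, pow_succ'])
  have h := (hmul.const_smul u⁻¹).sub (hasSum_exp_smul u a)
  rw [inv_smul_smul₀ hu] at h
  rw [sub_mul, one_mul]
  exact h.congr_fun fun n => by rw [smul_smul, ← sub_smul]; congr 1; ring

variable [NormOneClass A]

lemma norm_exp_smul_le {u : ℝ} (hu : 0 ≤ u) (a : A) : ‖exp (u • a)‖ ≤ Real.exp (u * ‖a‖) := by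
  have h := hasSum_exp_smul u ‖a‖
  rw [smul_eq_mul, ← Real.exp_eq_exp_ℝ] at h
  refine (hasSum_exp_smul u a).norm_le_of_bounded h fun n => ?_
  rw [norm_smul, smul_eq_mul, Real.norm_of_nonneg (by positivity)]
  gcongr
  exact norm_pow_le a n

lemma norm_exp_smul_sub_smul_one_le_one {u c : ℝ} (hu : 0 ≤ u) {a : A} (ha : ‖a‖ ≤ c) :
    ‖exp (u • (a - c • (1 : A)))‖ ≤ 1 := by
  rw [exp_smul_sub_smul_one, norm_smul, Real.norm_of_nonneg (Real.exp_pos _).le]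
  calc Real.exp (-(u * c)) * ‖exp (u • a)‖
      ≤ Real.exp (-(u * c)) * Real.exp (u * ‖a‖) := by gcongr; exact norm_exp_smul_le hu a
    _ ≤ Real.exp (-(u * c)) * Real.exp (u * c) := by gcongr
    _ = 1 := by rw [← Real.exp_add, neg_add_cancel, Real.exp_zero]

lemma norm_exp_smul_sum_sub_one_le_one {ι : Type*} (s : Finset ι) {u : ℝ} (hu : 0 ≤ u)
    {a : ι → A} (ha : ∀ i, ‖a i‖ ≤ 1) : ‖exp (u • ∑ i ∈ s, (a i - 1))‖ ≤ 1 := by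
  have hsum : ∑ i ∈ s, (a i - 1) = ∑ i ∈ s, a i - (s.card : ℝ) • (1 : A) := by
    rw [Finset.sum_sub_distrib, Finset.sum_const, Nat.cast_smul_eq_nsmul]
  rw [hsum]
  refine norm_exp_smul_sub_smul_one_le_one hu ((norm_sum_le_of_le s fun i _ => ha i).trans ?_)
  simp

lemma norm_sub_one_mul_exp_le_inv_sqrt {u : ℝ} (hu : 0 < u) {a : A} (ha : ‖a‖ ≤ 1) :
    ‖(a - 1) * exp (u • (a - 1))‖ ≤ (√u)⁻¹ := by
  have : 0 < √u := Real.sqrt_pos.2 hu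
  -- AM-GM replaces `|n / u - 1|` by its square, whose Poisson mean is `1 / u`.
  have hamgm (z : ℝ) : |z| ≤ √u / 2 * z ^ 2 + (√u)⁻¹ / 2 := by
    have hsq : √u / 2 * z ^ 2 + (√u)⁻¹ / 2 - |z| = (√u * |z| - 1) ^ 2 / (2 * √u) := by
      rw [← sq_abs z]; field_simp; ring
    have : 0 ≤ (√u * |z| - 1) ^ 2 / (2 * √u) := by positivity
    linarith
  have hbound : HasSum (fun n : ℕ => (√u / 2 * (n / u - 1) ^ 2 + (√u)⁻¹ / 2) *
      (u ^ n / n.factorial)) ((√u)⁻¹ * Real.exp u) := by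
    rw [show (√u)⁻¹ * Real.exp u = √u / 2 * (Real.exp u / u) + (√u)⁻¹ / 2 * Real.exp u by
      field_simp; rw [Real.sq_sqrt hu.le]; ring]
    exact (((hasSum_sq_div_sub_one_mul_poisson hu.ne').mul_left (√u / 2)).add
      ((hasSum_poisson u).mul_left ((√u)⁻¹ / 2))).congr_fun fun n => by ring
  have hexp : ‖(a - 1) * exp (u • a)‖ ≤ (√u)⁻¹ * Real.exp u := by
    refine (hasSum_sub_one_mul_exp_smul hu.ne' a).norm_le_of_bounded hbound fun n => ?_
    rw [norm_smul, norm_mul, Real.norm_eq_abs, Real.norm_of_nonneg (by positivity)]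
    calc |n / u - 1| * (u ^ n / n.factorial) * ‖a ^ n‖
        ≤ |n / u - 1| * (u ^ n / n.factorial) * 1 := by
          gcongr
          exact (norm_pow_le a n).trans (pow_le_one₀ (norm_nonneg a) ha)
      _ ≤ (√u / 2 * (n / u - 1) ^ 2 + (√u)⁻¹ / 2) * (u ^ n / n.factorial) := by
          rw [mul_one]
          gcongr
          exact hamgm _
  rw [exp_smul_sub_one, mul_smul_comm, norm_smul, Real.norm_of_nonneg (Real.exp_pos _).le]
  calc Real.exp (-u) * ‖(a - 1) * exp (u • a)‖
      ≤ Real.exp (-u) * ((√u)⁻¹ * Real.exp u) := by gcongr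
    _ = (√u)⁻¹ := by rw [mul_left_comm, ← Real.exp_add, neg_add_cancel, Real.exp_zero, mul_one]

lemma norm_sub_one_mul_exp_le_two {u : ℝ} (hu : 0 ≤ u) {a : A} (ha : ‖a‖ ≤ 1) :
    ‖(a - 1) * exp (u • (a - 1))‖ ≤ 2 := by
  have hexp : ‖exp (u • (a - 1))‖ ≤ 1 := by
    simpa using norm_exp_smul_sub_smul_one_le_one hu ha
  have hsub : ‖a - 1‖ ≤ 2 := (norm_sub_le a 1).trans (by rw [norm_one]; linarith)
  calc ‖(a - 1) * exp (u • (a - 1))‖ ≤ ‖a - 1‖ * ‖exp (u • (a - 1))‖ := norm_mul_le _ _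
    _ ≤ 2 * 1 := by gcongr
    _ = 2 := mul_one 2

lemma norm_sub_one_mul_exp_le {u : ℝ} (hu : 0 ≤ u) {a : A} (ha : ‖a‖ ≤ 1) :
    ‖(a - 1) * exp (u • (a - 1))‖ ≤ √(5 / (1 + u)) := by
  rcases le_total u (1 / 4) with hsmall | hlarge
  · refine (norm_sub_one_mul_exp_le_two hu ha).trans (Real.le_sqrt_of_sq_le ?_)
    rw [le_div_iff₀ (by positivity)]
    linarith
  · have hpos : 0 < u := by linarith
    refine (norm_sub_one_mul_exp_le_inv_sqrt hpos ha).trans ?_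
    rw [← Real.sqrt_inv, ← one_div]
    refine Real.sqrt_le_sqrt ?_
    rw [div_le_div_iff₀ hpos (by positivity)]
    linarith

lemma norm_sub_one_mul_sub_one_mul_exp_le {ι : Type*} [Fintype ι] {a : ι → A}
    (ha : ∀ i, ‖a i‖ ≤ 1) (hcomm : ∀ i j, Commute (a i) (a j)) {p q : ι} (hpq : p ≠ q) {u : ℝ}
    (hu : 0 ≤ u) :
    ‖(a p - 1) * (a q - 1) * exp (u • ∑ i, (a i - 1))‖ ≤ 5 / (1 + u) := by
  have hcomm' (i j : ι) : Commute (a i - 1) (a j - 1) :=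
    ((hcomm i j).sub_right (Commute.one_right _)).sub_left (Commute.one_left _)
  set r : A := ∑ i ∈ (Finset.univ.erase p).erase q, (a i - 1)
  have hr (i : ι) : Commute (a i - 1) r := Commute.sum_right _ _ _ fun j _ => hcomm' i j
  have hsum : ∑ i, (a i - 1) = (a p - 1) + ((a q - 1) + r) := by
    rw [Finset.add_sum_erase _ (fun i => a i - 1) (by simp [hpq.symm]),
      Finset.add_sum_erase _ (fun i => a i - 1) (Finset.mem_univ p)]
  have hfactor : (a p - 1) * (a q - 1) * exp (u • ∑ i, (a i - 1)) =
      ((a p - 1) * exp (u • (a p - 1))) * ((a q - 1) * exp (u • (a q - 1))) * exp (u • r) := by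
    have hqp : Commute (a q - 1) (exp (u • (a p - 1))) := ((hcomm' q p).smul_right u).exp_right
    rw [hsum, exp_smul_add_of_commute u ((hcomm' p q).add_right (hr p)),
      exp_smul_add_of_commute u (hr q)]
    simp only [mul_assoc]
    rw [hqp.left_comm]
  rw [hfactor]
  calc _ ≤ ‖(a p - 1) * exp (u • (a p - 1))‖ * ‖(a q - 1) * exp (u • (a q - 1))‖ *
          ‖exp (u • r)‖ :=
        (norm_mul_le _ _).trans (by gcongr; exact norm_mul_le _ _)
    _ ≤ √(5 / (1 + u)) * √(5 / (1 + u)) * 1 := by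
        gcongr
        exacts [norm_sub_one_mul_exp_le hu (ha p), norm_sub_one_mul_exp_le hu (ha q),
          norm_exp_smul_sum_sub_one_le_one _ hu ha]
    _ = 5 / (1 + u) := by rw [mul_one, Real.mul_self_sqrt (by positivity)]

end BanachAlgebra

section Duhamel

variable {A : Type*} [NormedRing A] [NormedAlgebra ℝ A] [CompleteSpace A]

lemma continuous_exp_smul_mul_mul_exp_smul (a b c : A) (t : ℝ) :
    Continuous fun s : ℝ => exp (s • a) * b * exp ((t - s) • c) :=
  ((differentiable_exp_smul_const ℝ a).continuous.mul continuous_const).mul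
    ((differentiable_exp_smul_const ℝ c).continuous.comp (continuous_const.sub continuous_id))

/-- Duhamel's formula. -/
lemma exp_smul_sub_exp_smul_eq_integral (a b : A) (t : ℝ) :
    exp (t • a) - exp (t • b) =
      ∫ s in (0 : ℝ)..t, exp (s • a) * (a - b) * exp ((t - s) • b) := by
  have hderiv (s : ℝ) : HasDerivAt (fun s : ℝ => exp (s • a) * exp ((t - s) • b))
      (exp (s • a) * (a - b) * exp ((t - s) • b)) s := by
    have hb : HasDerivAt (fun s : ℝ => exp ((t - s) • b)) (-(b * exp ((t - s) • b))) s :=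
      ((hasDerivAt_exp_smul_const' (𝕂 := ℝ) b (t - s)).scomp s
        ((hasDerivAt_id s).const_sub t)).congr_deriv (neg_one_smul _ _)
    refine ((hasDerivAt_exp_smul_const (𝕂 := ℝ) a s).mul hb).congr_deriv ?_
    noncomm_ring
  rw [intervalIntegral.integral_eq_sub_of_hasDerivAt (fun s _ => hderiv s)
    ((continuous_exp_smul_mul_mul_exp_smul a (a - b) b t).intervalIntegrable 0 t)]
  simp

end Duhamel

section Semigroup

variable {E : Type*} [NormedAddCommGroup E] [NormedSpace ℝ E]

/-- The semigroup `e^{tL}` generated by a bounded operator `L`. -/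
def semigroup (L : E →L[ℝ] E) (t : ℝ) : E →L[ℝ] E := exp (t • L)

lemma commute_semigroup {A L : E →L[ℝ] E} (h : Commute A L) (t : ℝ) : Commute A (semigroup L t) :=
  (h.smul_right t).exp_right

variable [CompleteSpace E]

lemma semigroup_apply_sub_eq_integral (L M : E →L[ℝ] E) (t : ℝ) (f : E) (ℓ : E →L[ℝ] ℝ) :
    ℓ (semigroup L t f) - ℓ (semigroup M t f) =
      ∫ s in (0 : ℝ)..t, ℓ (semigroup L s ((L - M) (semigroup M (t - s) f))) := by
  have hint : IntervalIntegrable (fun s : ℝ => exp (s • L) * (L - M) * exp ((t - s) • M))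
      MeasureTheory.volume 0 t :=
    (continuous_exp_smul_mul_mul_exp_smul L (L - M) M t).intervalIntegrable 0 t
  have h := congrArg (ℓ.comp (ContinuousLinearMap.apply ℝ E f))
    (exp_smul_sub_exp_smul_eq_integral L M t)
  rw [← ContinuousLinearMap.intervalIntegral_comp_comm _ hint, map_sub] at h
  exact h

lemma hasSum_semigroup_apply (L : E →L[ℝ] E) (t : ℝ) (f : E) :
    HasSum (fun n : ℕ => (t ^ n / n.factorial) • (L ^ n) f) (semigroup L t f) := by
  have h := (ContinuousLinearMap.apply ℝ E f).hasSum (hasSum_exp_smul t L)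
  exact h

lemma semigroup_apply_mem {K : ProperCone ℝ E} {L : E →L[ℝ] E} {c : ℝ}
    (hL : ∀ f ∈ K, L f + c • f ∈ K) {t : ℝ} (ht : 0 ≤ t) {f : E} (hf : f ∈ K) :
    semigroup L t f ∈ K := by
  set M : E →L[ℝ] E := L + c • 1
  have hpow (n : ℕ) : (M ^ n) f ∈ K := by
    induction n with
    | zero => exact hf
    | succ n ih => rw [pow_succ']; exact hL _ ih
  have hexp : semigroup M t f ∈ K :=
    K.isClosed.mem_of_tendsto (hasSum_semigroup_apply M t f) <| .of_forall fun s =>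
      sum_mem fun n _ => K.smul_mem (hpow n) (by positivity)
  rw [show L = M - c • 1 from (add_sub_cancel_right L _).symm, semigroup, exp_smul_sub_smul_one]
  exact K.smul_mem hexp (Real.exp_pos _).le

end Semigroup

section DiscreteSpace

variable {α : Type*} [TopologicalSpace α]

instance [Nonempty α] : Nontrivial (α →ᵇ ℝ) :=
  let ⟨x⟩ := ‹Nonempty α›
  ⟨0, 1, fun h => zero_ne_one (DFunLike.congr_fun h x)⟩

lemma hasSum_semigroup_apply_apply (L : (α →ᵇ ℝ) →L[ℝ] (α →ᵇ ℝ)) (t : ℝ) (f : α →ᵇ ℝ) (x : α) :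
    HasSum (fun n : ℕ => t ^ n / n.factorial * (L ^ n) f x) (semigroup L t f x) :=
  (BoundedContinuousFunction.evalCLM ℝ x).hasSum (hasSum_semigroup_apply L t f)

lemma tsum_iterate_eq_semigroup_apply {L : (α →ᵇ ℝ) →L[ℝ] (α →ᵇ ℝ)} {T : (α → ℝ) → α → ℝ}
    (hL : ∀ f, ⇑(L f) = T f) (t : ℝ) (f : α →ᵇ ℝ) (x : α) :
    ∑' n : ℕ, t ^ n / n.factorial * T^[n] f x = semigroup L t f x := by
  have hiter (n : ℕ) : ⇑((L ^ n) f) = T^[n] f := by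
    induction n with
    | zero => rfl
    | succ n ih => rw [pow_succ', Function.iterate_succ_apply', ← ih, ← hL]; rfl
  simp only [← hiter]
  exact (hasSum_semigroup_apply_apply L t f x).tsum_eq

/-- The cone of bounded functions that are nonnegative on `S`. -/
def nonnegOn (S : Set α) : ProperCone ℝ (α →ᵇ ℝ) :=
  ⨅ x ∈ S, (ProperCone.positive ℝ ℝ).comap (BoundedContinuousFunction.evalCLM ℝ x)

@[simp] lemma mem_nonnegOn {S : Set α} {f : α →ᵇ ℝ} : f ∈ nonnegOn S ↔ ∀ x ∈ S, 0 ≤ f x := by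
  simp [nonnegOn]

variable [DiscreteTopology α]

/-- The Kronecker delta `deltaFn y` as a bounded function. -/
def boundedDelta (y : α) : α →ᵇ ℝ := .indicator {y} (isClopen_discrete _)

lemma coe_boundedDelta (y : α) : ⇑(boundedDelta y) = deltaFn y := by
  ext x
  simp [boundedDelta, deltaFn, Set.indicator_apply]

lemma sum_abs_apply_boundedDelta_le (ℓ : (α →ᵇ ℝ) →L[ℝ] ℝ) (s : Finset α) :
    ∑ y ∈ s, |ℓ (boundedDelta y)| ≤ ‖ℓ‖ := by
  let φ : α →ᵇ ℝ := ∑ y ∈ s, (SignType.sign (ℓ (boundedDelta y)) : ℝ) • boundedDelta y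
  have hφ : ‖φ‖ ≤ 1 := by
    refine (BoundedContinuousFunction.norm_le zero_le_one).2 fun x => ?_
    have hx : φ x = if x ∈ s then (SignType.sign (ℓ (boundedDelta x)) : ℝ) else 0 := by
      simp [φ, coe_boundedDelta, deltaFn]
    rw [hx]
    split_ifs
    · rcases SignType.trichotomy (SignType.sign (ℓ (boundedDelta x))) with h | h | h <;> simp [h]
    · simp
  calc ∑ y ∈ s, |ℓ (boundedDelta y)| = ℓ φ := by
        simp only [φ, map_sum, map_smul, smul_eq_mul, sign_mul_self]
    _ ≤ ‖ℓ‖ * ‖φ‖ := (le_abs_self _).trans (ℓ.le_opNorm φ)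
    _ ≤ ‖ℓ‖ := mul_le_of_le_one_right (norm_nonneg ℓ) hφ

lemma summable_abs_apply_boundedDelta (ℓ : (α →ᵇ ℝ) →L[ℝ] ℝ) :
    Summable fun y => |ℓ (boundedDelta y)| :=
  summable_of_sum_le (fun _ => abs_nonneg _) (sum_abs_apply_boundedDelta_le ℓ)

lemma tsum_abs_apply_boundedDelta_le (ℓ : (α →ᵇ ℝ) →L[ℝ] ℝ) :
    ∑' y, |ℓ (boundedDelta y)| ≤ ‖ℓ‖ :=
  (summable_abs_apply_boundedDelta ℓ).tsum_le_of_sum_le (sum_abs_apply_boundedDelta_le ℓ)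

/-- The generator of the jumps `x ↦ s x`, at rate one, from the sites `x ∈ A`. -/
def jumpGenerator (A : Set α) (s : α → α) : (α →ᵇ ℝ) →L[ℝ] (α →ᵇ ℝ) :=
  ContinuousLinearMap.mul ℝ _ (.indicator A (isClopen_discrete A)) ∘L
    (BoundedContinuousFunction.compContinuousCLM ℝ ℝ ⟨s, continuous_of_discreteTopology⟩ - 1)

lemma jumpGenerator_apply (A : Set α) (s : α → α) (f : α →ᵇ ℝ) (x : α) :
    jumpGenerator A s f x = if x ∈ A then f (s x) - f x else 0 := by
  simp [jumpGenerator, Set.indicator_apply, ite_sub_ite]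

lemma jumpGenerator_add_self_mem_nonnegOn {A S : Set α} {s : α → α}
    (hs : ∀ x ∈ A, x ∈ S → s x ∈ S) {f : α →ᵇ ℝ} (hf : f ∈ nonnegOn S) :
    jumpGenerator A s f + f ∈ nonnegOn S := by
  rw [mem_nonnegOn] at hf ⊢
  intro x hx
  rw [BoundedContinuousFunction.add_apply, jumpGenerator_apply]
  split_ifs with hA
  · rw [sub_add_cancel]
    exact hf _ (hs x hA hx)
  · rw [zero_add]
    exact hf x hx

end DiscreteSpace

section RandomWalk

variable {G : Type*} [AddCommGroup G] [TopologicalSpace G] [DiscreteTopology G]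

/-- The translation `f ↦ f (· + v)` of bounded functions. -/
def translation (v : G) : (G →ᵇ ℝ) →L[ℝ] (G →ᵇ ℝ) :=
  BoundedContinuousFunction.compContinuousCLM ℝ ℝ ⟨(· + v), continuous_of_discreteTopology⟩

@[simp] lemma translation_apply (v : G) (f : G →ᵇ ℝ) (x : G) : translation v f x = f (x + v) := rfl

lemma norm_translation_le_one (v : G) : ‖translation v‖ ≤ 1 :=
  ContinuousLinearMap.opNorm_le_bound _ zero_le_one fun f => by
    rw [one_mul]
    exact BoundedContinuousFunction.norm_compContinuous_le f _

lemma commute_translation (v w : G) : Commute (translation v) (translation w) := by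
  ext f x
  exact congrArg f (add_right_comm x v w)

variable {ι : Type*} [Fintype ι]

/-- The generator of the random walk on `G` which makes each of the steps `u i` at rate one. -/
def walkGenerator (u : ι → G) : (G →ᵇ ℝ) →L[ℝ] (G →ᵇ ℝ) :=
  ∑ i, (translation (u i) - 1)

lemma walkGenerator_apply (u : ι → G) (f : G →ᵇ ℝ) (x : G) :
    walkGenerator u f x = ∑ i, (f (x + u i) - f x) := by
  simp [walkGenerator]

lemma walkGenerator_add_smul_apply (u : ι → G) (f : G →ᵇ ℝ) (x : G) :
    (walkGenerator u f + (2 * Fintype.card ι : ℝ) • f) x = ∑ i, (f (x + u i) + f x) := by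
  simp only [BoundedContinuousFunction.coe_add, BoundedContinuousFunction.coe_smul, smul_eq_mul,
    Pi.add_apply, walkGenerator_apply, Finset.sum_sub_distrib, Finset.sum_const, Finset.card_univ,
    nsmul_eq_mul, Finset.sum_add_distrib]
  ring

lemma commute_walkGenerator (u : ι → G) (v : G) : Commute (translation v) (walkGenerator u) := by
  ext f x
  simp [walkGenerator_apply, add_right_comm]

lemma norm_translation_sub_one_mul_semigroup_le (u : ι → G) {p q : ι} (hpq : p ≠ q)
    {t : ℝ} (ht : 0 ≤ t) :
    ‖(translation (u p) - 1) * (translation (u q) - 1) * semigroup (walkGenerator u) t‖ ≤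
      5 / (1 + t) :=
  norm_sub_one_mul_sub_one_mul_exp_le (a := fun i => translation (u i))
    (fun i => norm_translation_le_one (u i))
    (fun i j => commute_translation (u i) (u j)) hpq ht

end RandomWalk

section PositiveDefinite

variable {G H : Type*} [AddCommGroup G] [AddCommGroup H]

/-- Positive-definite real functions on an abelian group. Only real coefficients are tested, so
evenness is not part of the definition. -/
def IsPosDef (f : G → ℝ) : Prop :=
  ∀ (ι : Type) [Fintype ι] (c : ι → ℝ) (x : ι → G), 0 ≤ ∑ i, ∑ j, c i * c j * f (x i - x j)

namespace IsPosDef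

lemma sum {κ : Type*} {s : Finset κ} {f : κ → G → ℝ} (hf : ∀ a ∈ s, IsPosDef (f a)) :
    IsPosDef fun v => ∑ a ∈ s, f a v := by
  intro ι _ c x
  calc 0 ≤ ∑ a ∈ s, ∑ i, ∑ j, c i * c j * f a (x i - x j) :=
        Finset.sum_nonneg fun a ha => hf a ha ι c x
    _ = ∑ i, ∑ j, c i * c j * ∑ a ∈ s, f a (x i - x j) := by
        simp only [Finset.mul_sum]
        rw [Finset.sum_comm]
        exact Finset.sum_congr rfl fun i _ => Finset.sum_comm

lemma add {f g : G → ℝ} (hf : IsPosDef f) (hg : IsPosDef g) : IsPosDef (f + g) := by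
  intro ι _ c x
  simpa only [Pi.add_apply, mul_add, Finset.sum_add_distrib] using
    add_nonneg (hf ι c x) (hg ι c x)

lemma const_smul {f : G → ℝ} (hf : IsPosDef f) {r : ℝ} (hr : 0 ≤ r) : IsPosDef (r • f) := by
  intro ι _ c x
  simpa only [Pi.smul_apply, smul_eq_mul, mul_left_comm _ r, Finset.mul_sum] using
    mul_nonneg hr (hf ι c x)

lemma indicator_ker (π : G →+ H) : IsPosDef ((π.ker : Set G).indicator (1 : G → ℝ)) := by
  intro ι _ c x
  let s := Finset.univ.image (π ∘ x)
  calc 0 ≤ ∑ h ∈ s, (∑ i, if π (x i) = h then c i else 0) ^ 2 := by positivity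
    _ = ∑ h ∈ s, ∑ i, ∑ j, (if π (x i) = h then c i else 0) * if π (x j) = h then c j else 0 := by
        simp only [sq, Finset.sum_mul_sum]
    _ = ∑ i, ∑ j, ∑ h ∈ s, (if π (x i) = h then c i else 0) * if π (x j) = h then c j else 0 := by
        rw [Finset.sum_comm]
        exact Finset.sum_congr rfl fun i _ => Finset.sum_comm
    _ = ∑ i, ∑ j, c i * c j * (π.ker : Set G).indicator 1 (x i - x j) := by
        refine Finset.sum_congr rfl fun i _ => Finset.sum_congr rfl fun j _ => ?_
        have hi : π (x i) ∈ s := Finset.mem_image_of_mem _ (Finset.mem_univ i)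
        rw [Finset.sum_eq_single_of_mem _ hi fun h _ hne => by rw [if_neg hne.symm, zero_mul],
          if_pos rfl, Set.indicator_apply, SetLike.mem_coe, AddMonoidHom.mem_ker, map_sub,
          sub_eq_zero, eq_comm (a := π (x j)), Pi.one_apply, mul_assoc, mul_boole]

lemma apply_add_apply_neg_le {f : G → ℝ} (hf : IsPosDef f) (v : G) : f v + f (-v) ≤ 2 * f 0 := by
  have h := hf (Fin 2) ![1, -1] ![v, 0]
  simp only [Fin.sum_univ_two, Matrix.cons_val_zero, Matrix.cons_val_one, sub_self, sub_zero,
    zero_sub] at h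
  linarith

-- The test of `f` on the points `x i` and `x i + e`, both with weight `c i`.
lemma add_translates {f : G → ℝ} (hf : IsPosDef f) (e : G) :
    IsPosDef fun v => f (v + e) + f (v - e) + 2 * f v := by
  intro ι _ c x
  have h := hf (ι ⊕ ι) (Sum.elim c c) (Sum.elim x fun i => x i + e)
  simp only [Fintype.sum_sum_type, Sum.elim_inl, Sum.elim_inr, ← Finset.sum_add_distrib] at h
  refine h.trans_eq (Finset.sum_congr rfl fun i _ => Finset.sum_congr rfl fun j _ => ?_)
  rw [add_sub_right_comm, add_sub_add_right_eq_sub, sub_add_eq_sub_sub]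
  ring

end IsPosDef

variable [TopologicalSpace G]

/-- The cone of bounded positive-definite functions on `G` that factor through `π`. -/
def posDefCone (π : G →+ H) : ProperCone ℝ (G →ᵇ ℝ) where
  carrier := {f | IsPosDef f ∧ Function.FactorsThrough f π}
  zero_mem' := ⟨fun _ _ _ _ => by simp, fun _ _ _ => rfl⟩
  add_mem' hf hg := ⟨hf.1.add hg.1, fun _ _ h => congrArg₂ (· + ·) (hf.2 h) (hg.2 h)⟩
  smul_mem' r _ hf := ⟨hf.1.const_smul r.2, fun _ _ h => congrArg (r.1 * ·) (hf.2 h)⟩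
  isClosed' := by
    have heval (x : G) : Continuous fun f : G →ᵇ ℝ => f x :=
      (BoundedContinuousFunction.evalCLM ℝ x).continuous
    simp only [IsPosDef, Function.FactorsThrough, Set.ofPred_and, Set.ofPred_forall]
    refine IsClosed.inter ?_ ?_
    · refine isClosed_iInter fun ι => isClosed_iInter fun _ => isClosed_iInter fun c =>
        isClosed_iInter fun x => isClosed_le continuous_const ?_
      fun_prop
    · exact isClosed_iInter fun x => isClosed_iInter fun y => isClosed_iInter fun _ =>
        isClosed_eq (heval x) (heval y)

variable [DiscreteTopology G] {ι : Type*} [Fintype ι] {π : G →+ H} {u : ι → G}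

-- The generator of a symmetric walk is half the sum of the operators
-- `f ↦ f (· + u i) + f (· - u i) - 2 * f`.
lemma walkGenerator_add_smul_mem_posDefCone {σ : Equiv.Perm ι} (hσ : ∀ i, u (σ i) = -u i)
    {f : G →ᵇ ℝ} (hf : f ∈ posDefCone π) :
    walkGenerator u f + (2 * Fintype.card ι : ℝ) • f ∈ posDefCone π := by
  have hsym (v : G) : ∑ i, f (v + u i) = ∑ i, f (v - u i) := by
    simp only [← Equiv.sum_comp σ fun i => f (v + u i), hσ, sub_eq_add_neg]
  refine ⟨?_, fun v w h => ?_⟩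
  · have h2 : (⇑(walkGenerator u f + (2 * Fintype.card ι : ℝ) • f)) =
        (1 / 2 : ℝ) • fun v => ∑ i, (f (v + u i) + f (v - u i) + 2 * f v) := by
      funext v
      rw [walkGenerator_add_smul_apply, Pi.smul_apply, Finset.sum_add_distrib,
        Finset.sum_add_distrib, Finset.sum_add_distrib, ← hsym, ← Finset.mul_sum, smul_eq_mul]
      ring
    rw [h2]
    exact (IsPosDef.sum fun i _ => hf.1.add_translates (u i)).const_smul (by norm_num)
  · rw [walkGenerator_add_smul_apply, walkGenerator_add_smul_apply]
    exact Finset.sum_congr rfl fun i _ =>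
      congrArg₂ (· + ·) (hf.2 (by rw [map_add, map_add, h])) (hf.2 h)

lemma semigroup_walkGenerator_mem_posDefCone {σ : Equiv.Perm ι} (hσ : ∀ i, u (σ i) = -u i)
    {t : ℝ} (ht : 0 ≤ t) {f : G →ᵇ ℝ} (hf : f ∈ posDefCone π) :
    semigroup (walkGenerator u) t f ∈ posDefCone π :=
  semigroup_apply_mem (fun _ => walkGenerator_add_smul_mem_posDefCone hσ) ht hf

end PositiveDefinite

section UnitVectors

variable {d k : ℕ}

lemma sum_sq_eq_one_iff {ι : Type*} [Fintype ι] [DecidableEq ι] {v : ι → ℤ} :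
    ∑ i, v i ^ 2 = 1 ↔ ∃ i, ∃ ε : ℤˣ, v = Pi.single i (ε : ℤ) := by
  constructor
  · intro h
    obtain ⟨i, -, hi⟩ := Finset.exists_ne_zero_of_sum_ne_zero (h.trans_ne one_ne_zero)
    have hpos : 0 < v i ^ 2 := (sq_nonneg _).lt_of_ne' hi
    have hsplit := Finset.add_sum_erase Finset.univ (fun j => v j ^ 2) (Finset.mem_univ i)
    have hrest : 0 ≤ ∑ j ∈ Finset.univ.erase i, v j ^ 2 :=
      Finset.sum_nonneg fun j _ => sq_nonneg (v j)
    have hzero (j : ι) (hj : j ≠ i) : v j ^ 2 = 0 :=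
      (Finset.sum_eq_zero_iff_of_nonneg fun j _ => sq_nonneg (v j)).1
        (show ∑ j ∈ Finset.univ.erase i, v j ^ 2 = 0 by lia) j (by simp [hj])
    have hunit : IsUnit (v i) := .of_mul_eq_one (v i) (by rw [← sq]; lia)
    refine ⟨i, hunit.unit, funext fun j => ?_⟩
    rcases eq_or_ne j i with rfl | hj
    · rw [Pi.single_eq_same, IsUnit.unit_spec]
    · rw [Pi.single_eq_of_ne hj, pow_eq_zero_iff two_ne_zero |>.1 (hzero j hj)]
  · rintro ⟨i, ε, rfl⟩
    simp [Pi.single_apply, ite_pow, ← Units.val_pow_eq_pow_val]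

/-- The unit vectors of `ℤ^d`, indexed by a coordinate and a sign. -/
def unitVec (p : Fin d × ℤˣ) : Fin d → ℤ := Pi.single p.1 (p.2 : ℤ)

/-- The unit vectors of `(ℤ^d)^k`, indexed by a particle and a unit vector of `ℤ^d`. -/
def unitConf (q : Fin k × Fin d × ℤˣ) : Conf d k := Pi.single q.1 (unitVec q.2)

lemma vnorm_eq_one_iff {v : Fin d → ℤ} : vnorm v = 1 ↔ ∃ p, unitVec p = v := by
  have hcast : vnorm v = 1 ↔ ∑ j, v j ^ 2 = 1 := by
    rw [vnorm, Real.sqrt_eq_one]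
    exact_mod_cast Iff.rfl
  simp only [hcast, sum_sq_eq_one_iff, unitVec, Prod.exists, eq_comm (b := v)]

lemma cnorm_eq_one_iff {v : Conf d k} : cnorm v = 1 ↔ ∃ q, unitConf q = v := by
  have hcast : cnorm v = 1 ↔ ∑ p : Fin k × Fin d, Function.uncurry v p ^ 2 = 1 := by
    rw [cnorm, Real.sqrt_eq_one, Fintype.sum_prod_type]
    exact_mod_cast Iff.rfl
  have hsingle (i : Fin k) (m : Fin d) (ε : ℤˣ) :
      Function.uncurry v = Pi.single (i, m) (ε : ℤ) ↔ unitConf (i, m, ε) = v := by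
    simp only [funext_iff, Prod.forall, Function.uncurry_apply_pair, unitConf, unitVec]
    refine forall_congr' fun i' => forall_congr' fun m' => ?_
    rcases eq_or_ne i' i with rfl | hi
    · simp [Pi.single_apply, eq_comm]
    · simp [hi, hi.symm, eq_comm]
  simp only [hcast, sum_sq_eq_one_iff, Prod.exists, hsingle]

lemma unitVec_ne_zero (p : Fin d × ℤˣ) : unitVec p ≠ 0 :=
  Pi.single_ne_zero_iff.2 p.2.ne_zero

lemma unitVec_injective : Function.Injective (unitVec (d := d)) := by
  rintro ⟨m, ε⟩ ⟨m', ε'⟩ h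
  obtain rfl : m = m' := by
    by_contra hm
    exact ε.ne_zero (by simpa [unitVec, hm] using congrFun h m)
  exact congrArg _ (Units.ext (Pi.single_injective m h))

lemma unitConf_injective : Function.Injective (unitConf (d := d) (k := k)) := by
  rintro ⟨i, p⟩ ⟨i', p'⟩ h
  obtain rfl : i = i' := by
    by_contra hi
    exact unitVec_ne_zero p (by simpa [unitConf, hi] using congrFun h i)
  exact congrArg _ (unitVec_injective (Pi.single_injective i h))

lemma unitVec_neg (m : Fin d) (ε : ℤˣ) : unitVec (m, -ε) = -unitVec (m, ε) := by
  simp [unitVec, Pi.single_neg]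

/-- The involution of the index set of `unitConf` that reverses the direction of the step. -/
def reverseStep : Equiv.Perm (Fin k × Fin d × ℤˣ) :=
  (Equiv.refl _).prodCongr ((Equiv.refl _).prodCongr (Equiv.neg _))

lemma unitConf_reverseStep (q : Fin k × Fin d × ℤˣ) : unitConf (reverseStep q) = -unitConf q :=
  (congrArg (Pi.single q.1) (unitVec_neg q.2.1 q.2.2)).trans (Pi.single_neg _ _)

lemma tsum_ite_cnorm_sub_eq_one (x : Conf d k) (g : Conf d k → ℝ) :
    ∑' y, (if cnorm (y - x) = 1 then g y else 0) = ∑ q, g (x + unitConf q) := by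
  have hinj : Function.Injective fun q => x + unitConf q :=
    (add_right_injective x).comp unitConf_injective
  have hiff (y : Conf d k) : cnorm (y - x) = 1 ↔ y ∈ Set.range fun q => x + unitConf q := by
    simp only [cnorm_eq_one_iff, Set.mem_range, eq_sub_iff_add_eq']
  rw [← hinj.tsum_eq fun y hy => (hiff y).1 (by_contra fun h => hy (if_neg h)), tsum_fintype]
  exact Finset.sum_congr rfl fun q _ => if_pos ((hiff _).2 ⟨q, rfl⟩)

lemma sum_ite_unitVec_eq (v : Fin d → ℤ) (c : ℝ) :
    ∑ p, (if v = unitVec p then c else 0) = if vnorm v = 1 then c else 0 := by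
  split_ifs with h
  · obtain ⟨p, rfl⟩ := vnorm_eq_one_iff.1 h
    simp [unitVec_injective.eq_iff]
  · exact Finset.sum_eq_zero fun p _ => if_neg fun hp => h (vnorm_eq_one_iff.2 ⟨p, hp.symm⟩)

lemma vnorm_sub_comm (v w : Fin d → ℤ) : vnorm (v - w) = vnorm (w - v) := by
  simp only [vnorm, Pi.sub_apply, Int.cast_sub, sub_sq_comm]

end UnitVectors

section Exclusion

variable {d k : ℕ} {x : Conf d k}

lemma cdelta_eq_add_single (i j : Fin k) (x : Conf d k) :
    cdelta j i x = x + Pi.single i (x j - x i) := by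
  funext l
  rcases eq_or_ne l i with rfl | hl
  · simp [cdelta]
  · simp [cdelta, hl]

lemma cswap_eq_add_single {i j : Fin k} (hij : i ≠ j) (x : Conf d k) :
    cswap i j x = x + Pi.single i (x j - x i) + Pi.single j (x i - x j) := by
  funext l
  rcases eq_or_ne l i with rfl | hi
  · simp [cswap, hij]
  · rcases eq_or_ne l j with rfl | hj
    · simp [cswap, hi]
    · simp [cswap, hi, hj, Equiv.swap_apply_of_ne_of_ne]

lemma cswap_mem_SSet (i j : Fin k) (hx : x ∈ SSet d k) : cswap i j x ∈ SSet d k :=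
  fun _ _ hab => hx _ _ ((Equiv.swap i j).injective.ne hab)

lemma add_single_notMem_SSet_iff (hx : x ∈ SSet d k) (i : Fin k) (v : Fin d → ℤ) :
    x + Pi.single i v ∉ SSet d k ↔ ∃ j, j ≠ i ∧ x j - x i = v := by
  have hval (l : Fin k) : (x + Pi.single i v : Conf d k) l = if l = i then x i + v else x l := by
    rcases eq_or_ne l i with rfl | hl
    · simp
    · simp [hl]
  simp only [SSet, Set.mem_ofPred_eq, hval, not_forall, not_not, sub_eq_iff_eq_add']
  constructor
  · rintro ⟨a, b, hab, h⟩
    split_ifs at h with ha hb hb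
    · exact absurd (ha.trans hb.symm) hab
    · exact ⟨b, hb, h.symm⟩
    · exact ⟨a, ha, h⟩
    · exact absurd h (hx a b hab)
  · rintro ⟨j, hj, h⟩
    exact ⟨j, i, hj, by rw [if_neg hj, if_pos rfl, h]⟩

lemma ite_add_unitConf_mem_SSet_eq_sum (hx : x ∈ SSet d k) (i : Fin k) (p : Fin d × ℤˣ) (c : ℝ) :
    (if x + unitConf (i, p) ∈ SSet d k then 0 else c) =
      ∑ j, if j ≠ i ∧ x j - x i = unitVec p then c else 0 := by
  have hiff := add_single_notMem_SSet_iff hx i (unitVec p)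
  split_ifs with h
  · exact (Finset.sum_eq_zero fun j _ => if_neg fun hj => hiff.2 ⟨j, hj⟩ h).symm
  · obtain ⟨j, hj⟩ := hiff.1 h
    rw [Fintype.sum_eq_single j fun l hl => if_neg fun hlv => ?_, if_pos hj]
    exact hx l j hl (sub_left_injective (hlv.2.trans hj.2.symm))

/-- The generator `Lexc` of the labelled exclusion process, on bounded functions. -/
def exclusionGenerator (d k : ℕ) : (Conf d k →ᵇ ℝ) →L[ℝ] (Conf d k →ᵇ ℝ) :=
  ∑ q, jumpGenerator {x | x + unitConf q ∈ SSet d k} (· + unitConf q) +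
    ∑ i : Fin k, ∑ j : Fin k,
      jumpGenerator {x | i < j ∧ vnorm (x i - x j) = 1 ∧ x ∈ SSet d k} (cswap i j)

lemma exclusionGenerator_apply (f : Conf d k →ᵇ ℝ) (x : Conf d k) :
    exclusionGenerator d k f x =
      ∑ q, (if x + unitConf q ∈ SSet d k then f (x + unitConf q) - f x else 0) +
        ∑ i : Fin k, ∑ j : Fin k,
          if i < j ∧ vnorm (x i - x j) = 1 ∧ x ∈ SSet d k then f (cswap i j x) - f x else 0 := by
  simp only [exclusionGenerator, add_apply, sum_apply, BoundedContinuousFunction.add_apply,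
    BoundedContinuousFunction.sum_apply, jumpGenerator_apply, Set.mem_ofPred_eq]
  congr!

lemma coe_exclusionGenerator (f : Conf d k →ᵇ ℝ) : ⇑(exclusionGenerator d k f) = Lexc f := by
  funext x
  rw [exclusionGenerator_apply, Lexc]
  simp only [ite_and (cnorm _ = 1)]
  rw [tsum_ite_cnorm_sub_eq_one x fun y => if y ∈ SSet d k then f y - f x else 0]

lemma coe_walkGenerator_unitConf (f : Conf d k →ᵇ ℝ) : ⇑(walkGenerator unitConf f) = Lrw f := by
  funext x
  rw [walkGenerator_apply, Lrw, tsum_ite_cnorm_sub_eq_one x fun y => f y - f x]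

lemma ptl_eq_semigroup (t : ℝ) (x y : Conf d k) :
    ptl t x y = semigroup (exclusionGenerator d k) t (boundedDelta y) x := by
  rw [← tsum_iterate_eq_semigroup_apply coe_exclusionGenerator, coe_boundedDelta, ptl]

lemma ptrw_eq_semigroup (t : ℝ) (x y : Conf d k) :
    ptrw t x y = semigroup (walkGenerator unitConf) t (boundedDelta y) x := by
  rw [← tsum_iterate_eq_semigroup_apply coe_walkGenerator_unitConf, coe_boundedDelta, ptrw]

lemma semigroup_exclusionGenerator_mem_nonnegOn {t : ℝ} (ht : 0 ≤ t) {f : Conf d k →ᵇ ℝ}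
    (hf : f ∈ nonnegOn (SSet d k)) :
    semigroup (exclusionGenerator d k) t f ∈ nonnegOn (SSet d k) := by
  refine semigroup_apply_mem (c := ∑ _q : Fin k × Fin d × ℤˣ, 1 + ∑ _i : Fin k, ∑ _j : Fin k, 1)
    (fun g hg => ?_) ht hf
  have hsum : exclusionGenerator d k g +
        (∑ _q : Fin k × Fin d × ℤˣ, 1 + ∑ _i : Fin k, ∑ _j : Fin k, 1 : ℝ) • g =
      ∑ q, (jumpGenerator {x | x + unitConf q ∈ SSet d k} (· + unitConf q) g + g) +
        ∑ i : Fin k, ∑ j : Fin k,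
          (jumpGenerator {x | i < j ∧ vnorm (x i - x j) = 1 ∧ x ∈ SSet d k} (cswap i j) g + g) := by
    simp only [exclusionGenerator, add_apply, sum_apply,
      add_smul, Finset.sum_smul, one_smul, Finset.sum_add_distrib]
    exact add_add_add_comm _ _ _ _
  rw [hsum]
  refine add_mem (sum_mem fun q _ => ?_) (sum_mem fun i _ => sum_mem fun j _ => ?_)
  · refine jumpGenerator_add_self_mem_nonnegOn (fun x hx _ => ?_) hg
    exact hx
  · exact jumpGenerator_add_self_mem_nonnegOn (fun _ _ hx => cswap_mem_SSet i j hx) hg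

end Exclusion

section ExchangeDefect

variable {d k : ℕ} {x : Conf d k}

/-- The rate at which `f` changes when the particles `i` and `j` jump independently onto each
other's positions, minus the rate at which it changes when they exchange their positions. -/
def exchangeDefect (f : Conf d k → ℝ) (i j : Fin k) (x : Conf d k) : ℝ :=
  f (cdelta j i x) - f x + (f (cdelta i j x) - f x) - (f (cswap i j x) - f x)

lemma sum_sum_ite_ne_eq_sum_sum_ite_lt {κ : Type*} [Fintype κ] [LinearOrder κ] (a : κ → κ → ℝ) :
    ∑ i, ∑ j, (if j ≠ i then a i j else 0) = ∑ i, ∑ j, if i < j then a i j + a j i else 0 := by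
  have hsplit (i j : κ) : (if j ≠ i then a i j else 0) =
      (if i < j then a i j else 0) + if j < i then a i j else 0 := by
    rcases lt_trichotomy i j with h | h | h
    · simp [h, h.ne', h.not_gt]
    · simp [h]
    · simp [h, h.ne, h.not_gt]
  simp only [hsplit, ite_add_zero, Finset.sum_add_distrib]
  rw [Finset.sum_comm (f := fun i j => if j < i then a i j else 0)]

lemma sum_sub_sum_ite_mem_SSet (hx : x ∈ SSet d k) (g : Conf d k → ℝ) :
    ∑ q, (g (x + unitConf q) - g x) -
        ∑ q, (if x + unitConf q ∈ SSet d k then g (x + unitConf q) - g x else 0) =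
      ∑ i, ∑ j, if j ≠ i then if vnorm (x j - x i) = 1 then g (cdelta j i x) - g x else 0
        else 0 := by
  rw [← Finset.sum_sub_distrib, Fintype.sum_prod_type]
  refine Finset.sum_congr rfl fun i _ => ?_
  calc ∑ p, (g (x + unitConf (i, p)) - g x -
          if x + unitConf (i, p) ∈ SSet d k then g (x + unitConf (i, p)) - g x else 0)
      = ∑ p, ∑ j, if j ≠ i ∧ x j - x i = unitVec p then g (x + unitConf (i, p)) - g x else 0 := by
        refine Finset.sum_congr rfl fun p _ => ?_
        rw [← ite_add_unitConf_mem_SSet_eq_sum hx, sub_ite, sub_self, sub_zero]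
    _ = ∑ j, ∑ p, if j ≠ i then if x j - x i = unitVec p then g (cdelta j i x) - g x else 0
          else 0 := by
        rw [Finset.sum_comm]
        refine Finset.sum_congr rfl fun j _ => Finset.sum_congr rfl fun p _ => ?_
        rw [ite_and]
        split_ifs with _ hp
        · rw [cdelta_eq_add_single, hp, unitConf]
        all_goals rfl
    _ = ∑ j, if j ≠ i then if vnorm (x j - x i) = 1 then g (cdelta j i x) - g x else 0
          else 0 := by
        refine Finset.sum_congr rfl fun j _ => ?_
        rw [← sum_ite_unitVec_eq]
        split_ifs
        · rfl
        · exact Finset.sum_const_zero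

lemma walkGenerator_sub_exclusionGenerator_apply (hx : x ∈ SSet d k) (f : Conf d k →ᵇ ℝ) :
    walkGenerator unitConf f x - exclusionGenerator d k f x =
      ∑ i, ∑ j, if i < j ∧ vnorm (x i - x j) = 1 then exchangeDefect f i j x else 0 := by
  rw [walkGenerator_apply, exclusionGenerator_apply, ← sub_sub, sum_sub_sum_ite_mem_SSet hx,
    sum_sum_ite_ne_eq_sum_sum_ite_lt, ← Finset.sum_sub_distrib]
  refine Finset.sum_congr rfl fun i _ => ?_
  rw [← Finset.sum_sub_distrib]
  refine Finset.sum_congr rfl fun j _ => ?_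
  simp only [hx, and_true, ite_and, vnorm_sub_comm (x j)]
  split_ifs
  · rfl
  all_goals simp

lemma exchangeDefect_eq_neg_mixed_difference {i j : Fin k} (hij : i ≠ j) (x : Conf d k)
    (f : Conf d k →ᵇ ℝ) :
    exchangeDefect f i j x =
      -((translation (Pi.single i (x j - x i)) - 1) * (translation (Pi.single j (x i - x j)) - 1) :
        (Conf d k →ᵇ ℝ) →L[ℝ] (Conf d k →ᵇ ℝ)) f x := by
  rw [exchangeDefect, cswap_eq_add_single hij, cdelta_eq_add_single, cdelta_eq_add_single]
  simp only [mul_apply_eq_comp, sub_apply, one_apply_eq_self, map_sub,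
    BoundedContinuousFunction.coe_sub, Pi.sub_apply, translation_apply, neg_sub]
  ring

lemma abs_exchangeDefect_semigroup_le {i j : Fin k} (hij : i ≠ j) (hadj : vnorm (x i - x j) = 1)
    {t : ℝ} (ht : 0 ≤ t) (f : Conf d k →ᵇ ℝ) :
    |exchangeDefect (semigroup (walkGenerator unitConf) t f) i j x| ≤ 5 / (1 + t) * ‖f‖ := by
  obtain ⟨p, hp⟩ := vnorm_eq_one_iff.1 hadj
  have hq : (i, (p.1, -p.2)) ≠ (j, p) := fun h => hij (congrArg Prod.fst h)
  have hneg : x j - x i = unitVec (p.1, -p.2) := by rw [unitVec_neg, hp, neg_sub]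
  rw [exchangeDefect_eq_neg_mixed_difference hij, hneg, ← hp, abs_neg]
  exact (((_ : (Conf d k →ᵇ ℝ)).norm_coe_le_norm x).trans (ContinuousLinearMap.le_opNorm _ f)).trans
    (mul_le_mul_of_nonneg_right (norm_translation_sub_one_mul_semigroup_le unitConf hq ht)
      (norm_nonneg f))

end ExchangeDefect

section Collision

variable {d k : ℕ} {a b : Fin k}

/-- The displacement `x a - x b` of the particle `a` from the particle `b`. -/
def displacement (a b : Fin k) : Conf d k →+ (Fin d → ℤ) :=
  Pi.evalAddMonoidHom (fun _ => Fin d → ℤ) a - Pi.evalAddMonoidHom (fun _ => Fin d → ℤ) b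

@[simp] lemma displacement_apply (a b : Fin k) (x : Conf d k) :
    displacement a b x = x a - x b := rfl

/-- The indicator of the collision `x a = x b` of two particles of the independent walks. -/
def collision (a b : Fin k) : Conf d k →ᵇ ℝ :=
  .indicator (displacement (d := d) a b).ker (isClopen_discrete _)

lemma collision_apply (a b : Fin k) (x : Conf d k) :
    collision a b x = if displacement a b x = 0 then 1 else 0 :=
  (Set.indicator_apply ..).trans (if_congr Iff.rfl rfl rfl)

lemma collision_mem_posDefCone (a b : Fin k) :
    (collision a b : Conf d k →ᵇ ℝ) ∈ posDefCone (displacement a b) :=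
  ⟨.indicator_ker _, fun x y h => by rw [collision_apply, collision_apply, h]⟩

lemma exchangeDefect_nonneg {f : Conf d k →ᵇ ℝ} (hf : f ∈ posDefCone (displacement a b))
    {i j : Fin k} (hij : i ≠ j) (x : Conf d k) : 0 ≤ exchangeDefect f i j x := by
  have hdelta (i j l : Fin k) : cdelta i j x l = if l = j then x i else x l :=
    Function.update_apply ..
  have hswap (l : Fin k) : cswap i j x l = if l = i then x j else if l = j then x i else x l := by
    rw [cswap, Function.comp_apply, Equiv.swap_apply_def, apply_ite x, apply_ite x]
  have hval {y z : Conf d k} (ha : y a = z a) (hb : y b = z b) : f y = f z :=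
    hf.2 (congrArg₂ (· - ·) ha hb)
  have hzero {y : Conf d k} (h : y a = y b) : f y = f 0 := hf.2 (by simp [h])
  have hneg {y : Conf d k} (ha : y a = x b) (hb : y b = x a) : f y = f (-x) :=
    hf.2 (by simp [ha, hb, neg_add_eq_sub])
  rw [exchangeDefect]
  by_cases hi : i = a ∨ i = b
  · by_cases hj : j = a ∨ j = b
    · have hji : f (cdelta j i x) = f 0 := hzero (by grind)
      have hij : f (cdelta i j x) = f 0 := hzero (by grind)
      have hswap : f (cswap i j x) = f (-x) := hneg (by grind) (by grind)
      have h := hf.1.apply_add_apply_neg_le x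
      rw [hji, hij, hswap]
      linarith
    · have hij : f (cdelta i j x) = f x := hval (by grind) (by grind)
      have hji : f (cdelta j i x) = f (cswap i j x) := hval (by grind) (by grind)
      rw [hij, hji]
      linarith
  · have hji : f (cdelta j i x) = f x := hval (by grind) (by grind)
    have hij : f (cdelta i j x) = f (cswap i j x) := hval (by grind) (by grind)
    rw [hji, hij]
    linarith

/-- The indicator that the displacement of two particles lies in the open positive quadrant of the
coordinate plane `(m₀, m₁)`. Its mixed second difference is the indicator of their collision. -/
def quadrant (a b : Fin k) (m₀ m₁ : Fin d) : Conf d k →ᵇ ℝ :=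
  .indicator {x | 1 ≤ displacement a b x m₀ ∧ 1 ≤ displacement a b x m₁ ∧
    ∀ m, m ≠ m₀ → m ≠ m₁ → displacement a b x m = 0} (isClopen_discrete _)

lemma displacement_unitConf (hab : a ≠ b) (p : Fin d × ℤˣ) :
    displacement a b (unitConf (a, p)) = unitVec p := by
  simp [unitConf, hab.symm]

lemma quadrant_apply (a b : Fin k) (m₀ m₁ : Fin d) (x : Conf d k) :
    quadrant a b m₀ m₁ x =
      (if 1 ≤ displacement a b x m₀ then 1 else 0) * (if 1 ≤ displacement a b x m₁ then 1 else 0) *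
        if ∀ m, m ≠ m₀ → m ≠ m₁ → displacement a b x m = 0 then 1 else 0 := by
  simp only [ite_zero_mul_ite_zero, mul_one, and_assoc]
  exact Set.indicator_apply ..

lemma collision_apply_eq_mul (a b : Fin k) (m₀ m₁ : Fin d) (x : Conf d k) :
    collision a b x =
      (if displacement a b x m₀ = 0 then 1 else 0) * (if displacement a b x m₁ = 0 then 1 else 0) *
        if ∀ m, m ≠ m₀ → m ≠ m₁ → displacement a b x m = 0 then 1 else 0 := by
  simp only [collision_apply, ite_zero_mul_ite_zero, mul_one, and_assoc]
  refine if_congr ⟨fun h => by simp [h], fun ⟨h₀, h₁, h⟩ => funext fun m => ?_⟩ rfl rfl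
  by_cases hm₀ : m = m₀
  · rw [hm₀, h₀, Pi.zero_apply]
  · by_cases hm₁ : m = m₁
    · rw [hm₁, h₁, Pi.zero_apply]
    · exact h m hm₀ hm₁

lemma mixed_difference_quadrant (hab : a ≠ b) {m₀ m₁ : Fin d} (hm : m₀ ≠ m₁) :
    ((translation (unitConf (a, m₀, 1)) - 1) * (translation (unitConf (a, m₁, 1)) - 1) :
      (Conf d k →ᵇ ℝ) →L[ℝ] (Conf d k →ᵇ ℝ)) (quadrant a b m₀ m₁) = collision a b := by
  ext x
  have hshift (m₂ m : Fin d) (y : Conf d k) : displacement a b (y + unitConf (a, m₂, 1)) m =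
      displacement a b y m + if m = m₂ then 1 else 0 := by
    rw [map_add, displacement_unitConf hab, Pi.add_apply]
    simp [unitVec, Pi.single_apply]
  have hrest (m₂ : Fin d) (h : m₂ = m₀ ∨ m₂ = m₁) (v : Fin d → ℤ) :
      (∀ m, m ≠ m₀ → m ≠ m₁ → (v m + if m = m₂ then 1 else 0) = 0) ↔
        ∀ m, m ≠ m₀ → m ≠ m₁ → v m = 0 := by
    grind
  have hdiff (r : ℤ) : (if r = 0 then 1 else 0) =
      (if 1 ≤ r + 1 then 1 else 0) - if 1 ≤ r then (1 : ℝ) else 0 := by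
    grind
  simp only [mul_apply_eq_comp, sub_apply, one_apply_eq_self, map_sub,
    BoundedContinuousFunction.coe_sub, Pi.sub_apply, translation_apply, quadrant_apply, hshift,
    collision_apply_eq_mul a b m₀ m₁, hrest, hm, hm.symm, true_or, or_true, if_true, if_false,
    add_zero, hdiff]
  ring

lemma norm_semigroup_collision_le (hd : 2 ≤ d) (hab : a ≠ b) {t : ℝ} (ht : 0 ≤ t) :
    ‖semigroup (walkGenerator unitConf) t (collision a b : Conf d k →ᵇ ℝ)‖ ≤ 5 / (1 + t) := by
  have : Nontrivial (Fin d) := Fin.nontrivial_iff_two_le.2 hd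
  obtain ⟨m₀, m₁, hm⟩ := exists_pair_ne (Fin d)
  set D : (Conf d k →ᵇ ℝ) →L[ℝ] (Conf d k →ᵇ ℝ) :=
    (translation (unitConf (a, m₀, 1)) - 1) * (translation (unitConf (a, m₁, 1)) - 1)
  have hcomm : Commute D (semigroup (walkGenerator unitConf) t) := by
    refine commute_semigroup (.mul_left ?_ ?_) t
    all_goals exact (commute_walkGenerator _ _).sub_left (.one_left _)
  have hq : (a, m₀, (1 : ℤˣ)) ≠ (a, m₁, 1) := by simp [hm]
  have hquadrant : ‖(quadrant a b m₀ m₁ : Conf d k →ᵇ ℝ)‖ ≤ 1 :=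
    (BoundedContinuousFunction.norm_le zero_le_one).2 fun x =>
      (norm_indicator_le_norm_self 1 x).trans norm_one.le
  calc ‖semigroup (walkGenerator unitConf) t (collision a b : Conf d k →ᵇ ℝ)‖
      = ‖(D * semigroup (walkGenerator unitConf) t : (Conf d k →ᵇ ℝ) →L[ℝ] (Conf d k →ᵇ ℝ))
          (quadrant a b m₀ m₁)‖ := by
        rw [hcomm.eq, ← mixed_difference_quadrant hab hm]
        rfl
    _ ≤ 5 / (1 + t) * 1 :=
        ContinuousLinearMap.le_of_opNorm_le_of_le _
          (norm_translation_sub_one_mul_semigroup_le unitConf hq ht) hquadrant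
    _ = 5 / (1 + t) := mul_one _

/-- A positive-definite majorant of the indicator of the event that `a` and `b` are adjacent. -/
def adjacencyMajorant (a b : Fin k) : Conf d k →ᵇ ℝ :=
  walkGenerator unitConf (collision a b) +
    (2 * Fintype.card (Fin k × Fin d × ℤˣ) : ℝ) • collision a b

lemma adjacencyMajorant_apply (a b : Fin k) (x : Conf d k) :
    adjacencyMajorant a b x = ∑ q, (collision a b (x + unitConf q) + collision a b x) :=
  walkGenerator_add_smul_apply _ _ _

lemma adjacencyMajorant_mem_posDefCone (a b : Fin k) :
    (adjacencyMajorant a b : Conf d k →ᵇ ℝ) ∈ posDefCone (displacement a b) :=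
  walkGenerator_add_smul_mem_posDefCone unitConf_reverseStep (collision_mem_posDefCone a b)

lemma collision_nonneg (a b : Fin k) (x : Conf d k) : 0 ≤ collision a b x := by
  rw [collision_apply]
  positivity

lemma adjacencyMajorant_nonneg (a b : Fin k) (x : Conf d k) : 0 ≤ adjacencyMajorant a b x := by
  rw [adjacencyMajorant_apply]
  exact Finset.sum_nonneg fun q _ => add_nonneg (collision_nonneg ..) (collision_nonneg ..)

lemma one_le_adjacencyMajorant (hab : a ≠ b) {x : Conf d k} (hadj : vnorm (x b - x a) = 1) :
    1 ≤ adjacencyMajorant a b x := by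
  obtain ⟨p, hp⟩ := vnorm_eq_one_iff.1 hadj
  have hcoll : collision a b (x + unitConf (a, p)) = 1 := by
    rw [collision_apply, if_pos]
    rw [map_add, displacement_unitConf hab, hp, displacement_apply, sub_add_sub_cancel', sub_self]
  rw [adjacencyMajorant_apply]
  calc (1 : ℝ) ≤ collision a b (x + unitConf (a, p)) + collision a b x :=
        hcoll ▸ le_add_of_nonneg_right (collision_nonneg ..)
    _ ≤ ∑ q, (collision a b (x + unitConf q) + collision a b x) :=
        Finset.single_le_sum (f := fun q => collision a b (x + unitConf q) + collision a b x)
          (fun q _ => add_nonneg (collision_nonneg ..) (collision_nonneg ..))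
          (Finset.mem_univ (a, p))

lemma semigroup_adjacencyMajorant_apply_le (hd : 2 ≤ d) (hab : a ≠ b) {t : ℝ} (ht : 0 ≤ t)
    (x : Conf d k) :
    semigroup (walkGenerator unitConf) t (adjacencyMajorant a b) x ≤
      20 * (k * d) / (1 + t) := by
  set f : Conf d k →ᵇ ℝ := semigroup (walkGenerator unitConf) t (collision a b)
  have hf (y : Conf d k) : f y ≤ 5 / (1 + t) :=
    (le_abs_self _).trans ((f.norm_coe_le_norm y).trans (norm_semigroup_collision_le hd hab ht))
  have hcomm := (commute_semigroup (Commute.refl (walkGenerator (unitConf (d := d) (k := k)))) t).eq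
  calc semigroup (walkGenerator unitConf) t (adjacencyMajorant a b) x
      = (walkGenerator unitConf f + (2 * Fintype.card (Fin k × Fin d × ℤˣ) : ℝ) • f) x := by
        rw [adjacencyMajorant, map_add, map_smul, ← mul_apply_eq_comp, ← hcomm]
        rfl
    _ = ∑ q, (f (x + unitConf q) + f x) := walkGenerator_add_smul_apply _ _ _
    _ ≤ ∑ _ : Fin k × Fin d × ℤˣ, (5 / (1 + t) + 5 / (1 + t)) :=
        Finset.sum_le_sum fun q _ => add_le_add (hf _) (hf _)
    _ = 20 * (k * d) / (1 + t) := by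
        rw [Finset.sum_const, Finset.card_univ, nsmul_eq_mul]
        simp only [Fintype.card_prod, Fintype.card_fin, Fintype.card_units_int]
        push_cast
        ring

lemma walkGenerator_sub_exclusionGenerator_mem_nonnegOn {f : Conf d k →ᵇ ℝ}
    (hf : f ∈ posDefCone (displacement a b)) :
    walkGenerator unitConf f - exclusionGenerator d k f ∈ nonnegOn (SSet d k) := by
  refine mem_nonnegOn.2 fun x hx => ?_
  rw [BoundedContinuousFunction.sub_apply, walkGenerator_sub_exclusionGenerator_apply hx]
  refine Finset.sum_nonneg fun i _ => Finset.sum_nonneg fun j _ => ?_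
  split_ifs with h
  · exact exchangeDefect_nonneg hf h.1.ne x
  · exact le_rfl

/-- Liggett's inequality. -/
theorem semigroup_exclusionGenerator_apply_le {f : Conf d k →ᵇ ℝ}
    (hf : f ∈ posDefCone (displacement a b)) {x : Conf d k} (hx : x ∈ SSet d k)
    {t : ℝ} (ht : 0 ≤ t) :
    semigroup (exclusionGenerator d k) t f x ≤ semigroup (walkGenerator unitConf) t f x := by
  have hduhamel := semigroup_apply_sub_eq_integral (exclusionGenerator d k)
    (walkGenerator unitConf) t f (BoundedContinuousFunction.evalCLM ℝ x)
  simp only [BoundedContinuousFunction.evalCLM_apply] at hduhamel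
  rw [← sub_nonpos, hduhamel, ← neg_nonneg, ← intervalIntegral.integral_neg]
  refine intervalIntegral.integral_nonneg ht fun s hs => ?_
  have hg := walkGenerator_sub_exclusionGenerator_mem_nonnegOn
    (semigroup_walkGenerator_mem_posDefCone unitConf_reverseStep (sub_nonneg.2 hs.2) hf)
  have h := mem_nonnegOn.1 (semigroup_exclusionGenerator_mem_nonnegOn hs.1 hg) x hx
  change 0 ≤ -(semigroup (exclusionGenerator d k) s (exclusionGenerator d k _ -
    walkGenerator unitConf _)) x
  rw [← neg_sub, map_neg, BoundedContinuousFunction.neg_apply, neg_neg]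
  exact h

end Collision

section LogarithmicRate

variable {t : ℝ}

lemma one_add_pos_and_one_add_sub_pos {s : ℝ} (ht : 0 ≤ t) (hs : s ∈ Set.uIcc 0 t) :
    0 < 1 + s ∧ 0 < 1 + (t - s) := by
  rw [Set.uIcc_of_le ht] at hs
  constructor <;> linarith [hs.1, hs.2]

lemma intervalIntegrable_one_div_mul (ht : 0 ≤ t) :
    IntervalIntegrable (fun s => 1 / ((1 + s) * (1 + (t - s)))) MeasureTheory.volume 0 t := by
  refine ContinuousOn.intervalIntegrable fun s hs => ?_
  obtain ⟨h₁, h₂⟩ := one_add_pos_and_one_add_sub_pos ht hs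
  exact ContinuousAt.continuousWithinAt (by fun_prop (disch := positivity))

lemma integral_one_div_mul (ht : 0 ≤ t) :
    ∫ s in (0 : ℝ)..t, 1 / ((1 + s) * (1 + (t - s))) = 2 * Real.log (1 + t) / (2 + t) := by
  have hderiv (s : ℝ) (hs : s ∈ Set.uIcc 0 t) :
      HasDerivAt (fun s => (Real.log (1 + s) - Real.log (1 + (t - s))) / (2 + t))
        (1 / ((1 + s) * (1 + (t - s)))) s := by
    obtain ⟨h₁, h₂⟩ := one_add_pos_and_one_add_sub_pos ht hs
    refine (((((hasDerivAt_id s).const_add 1).log h₁.ne').sub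
      ((((hasDerivAt_id s).const_sub t).const_add 1).log h₂.ne')).div_const (2 + t)).congr_deriv ?_
    rw [id, neg_div, sub_neg_eq_add, div_add_div _ _ h₁.ne' h₂.ne', div_div, div_eq_div_iff]
    · ring
    all_goals positivity
  rw [intervalIntegral.integral_eq_sub_of_hasDerivAt hderiv]
  · rw [sub_self, sub_zero, add_zero, Real.log_one]
    ring
  · exact intervalIntegrable_one_div_mul ht

lemma log_one_add_div_le_log_div (ht : 0 ≤ t) :
    Real.log (1 + t) / (2 + t) ≤ Real.log (t + 2) / (Real.sqrt t + 1) := by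
  have hsqrt : Real.sqrt t + 1 ≤ 2 + t := by
    nlinarith [Real.sq_sqrt ht, sq_nonneg (Real.sqrt t - 1)]
  have hlog : 0 ≤ Real.log (t + 2) := Real.log_nonneg (by linarith)
  gcongr ?_ / ?_
  exact Real.log_le_log (by linarith) (by linarith)

lemma log_one_add_div_le_three_div (ht : 0 ≤ t) :
    Real.log (1 + t) / (2 + t) ≤ 3 / (Real.sqrt t + 1) := by
  set s := Real.sqrt t
  have hs : 0 ≤ s := Real.sqrt_nonneg t
  have hst : s ^ 2 = t := Real.sq_sqrt ht
  have hlog : Real.log (1 + t) ≤ 2 * s :=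
    calc Real.log (1 + t) ≤ Real.log ((1 + s) ^ 2) := Real.log_le_log (by linarith) (by nlinarith)
      _ = 2 * Real.log (1 + s) := mod_cast Real.log_pow (1 + s) 2
      _ ≤ 2 * s := by linarith [Real.log_le_sub_one_of_pos (show 0 < 1 + s by linarith)]
  rw [div_le_div_iff₀ (by linarith) (by linarith)]
  calc Real.log (1 + t) * (s + 1) ≤ 2 * s * (s + 1) := by gcongr
    _ ≤ 3 * (2 + t) := by nlinarith [sq_nonneg (s - 1)]

end LogarithmicRate

section Comparison

variable {d k : ℕ} {x : Conf d k}

lemma abs_semigroup_exclusionGenerator_apply_le {f g : Conf d k →ᵇ ℝ}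
    (hfg : ∀ y ∈ SSet d k, |f y| ≤ g y) {t : ℝ} (ht : 0 ≤ t) (hx : x ∈ SSet d k) :
    |semigroup (exclusionGenerator d k) t f x| ≤ semigroup (exclusionGenerator d k) t g x := by
  have hsub : g - f ∈ nonnegOn (SSet d k) :=
    mem_nonnegOn.2 fun y hy => sub_nonneg.2 (abs_le.1 (hfg y hy)).2
  have hadd : g + f ∈ nonnegOn (SSet d k) :=
    mem_nonnegOn.2 fun y hy => neg_le_iff_add_nonneg'.1 (abs_le.1 (hfg y hy)).1
  have hle := mem_nonnegOn.1 (semigroup_exclusionGenerator_mem_nonnegOn ht hsub) x hx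
  have hge := mem_nonnegOn.1 (semigroup_exclusionGenerator_mem_nonnegOn ht hadd) x hx
  rw [map_sub, BoundedContinuousFunction.sub_apply] at hle
  rw [map_add, BoundedContinuousFunction.add_apply] at hge
  exact abs_le.2 ⟨by linarith, by linarith⟩

/-- A majorant on `𝕊^k` of the number of pairs of adjacent particles. -/
def adjacentPairsMajorant (d k : ℕ) : Conf d k →ᵇ ℝ :=
  ∑ i, ∑ j, if i < j then adjacencyMajorant i j else 0

lemma adjacentPairsMajorant_apply (x : Conf d k) :
    adjacentPairsMajorant d k x = ∑ i, ∑ j, if i < j then adjacencyMajorant i j x else 0 := by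
  simp only [adjacentPairsMajorant, BoundedContinuousFunction.sum_apply,
    apply_ite (fun f : Conf d k →ᵇ ℝ => f x), BoundedContinuousFunction.coe_zero, Pi.zero_apply]

lemma semigroup_adjacentPairsMajorant_apply_le (hd : 2 ≤ d) (hx : x ∈ SSet d k) {t : ℝ}
    (ht : 0 ≤ t) :
    semigroup (exclusionGenerator d k) t (adjacentPairsMajorant d k) x ≤
      20 * (k ^ 3 * d) / (1 + t) := by
  calc semigroup (exclusionGenerator d k) t (adjacentPairsMajorant d k) x
      = ∑ i, ∑ j, if i < j then
          semigroup (exclusionGenerator d k) t (adjacencyMajorant i j) x else 0 := by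
        simp only [adjacentPairsMajorant, map_sum, apply_ite (semigroup _ t), map_zero,
          BoundedContinuousFunction.sum_apply, apply_ite (fun f : Conf d k →ᵇ ℝ => f x),
          BoundedContinuousFunction.coe_zero, Pi.zero_apply]
    _ ≤ ∑ _ : Fin k, ∑ _ : Fin k, 20 * (k * d) / (1 + t) := by
        refine Finset.sum_le_sum fun i _ => Finset.sum_le_sum fun j _ => ?_
        split_ifs with hij
        · exact (semigroup_exclusionGenerator_apply_le
            (adjacencyMajorant_mem_posDefCone i j) hx ht).trans
            (semigroup_adjacencyMajorant_apply_le hd hij.ne ht x)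
        · positivity
    _ = 20 * (k ^ 3 * d) / (1 + t) := by
        simp only [Finset.sum_const, Finset.card_univ, Fintype.card_fin, nsmul_eq_mul]
        ring

lemma abs_exclusionGenerator_sub_walkGenerator_semigroup_le (hx : x ∈ SSet d k) {t : ℝ}
    (ht : 0 ≤ t) (f : Conf d k →ᵇ ℝ) :
    |(exclusionGenerator d k - walkGenerator unitConf : (Conf d k →ᵇ ℝ) →L[ℝ] (Conf d k →ᵇ ℝ))
        (semigroup (walkGenerator unitConf) t f) x| ≤
      5 / (1 + t) * ‖f‖ * adjacentPairsMajorant d k x := by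
  change |exclusionGenerator d k _ x - walkGenerator unitConf _ x| ≤ _
  rw [abs_sub_comm, walkGenerator_sub_exclusionGenerator_apply hx, adjacentPairsMajorant_apply,
    Finset.mul_sum]
  refine (Finset.abs_sum_le_sum_abs ..).trans (Finset.sum_le_sum fun i _ => ?_)
  rw [Finset.mul_sum]
  refine (Finset.abs_sum_le_sum_abs ..).trans (Finset.sum_le_sum fun j _ => ?_)
  have hR := adjacencyMajorant_nonneg i j x
  by_cases hij : i < j
  · by_cases hadj : vnorm (x i - x j) = 1
    · rw [if_pos ⟨hij, hadj⟩, if_pos hij]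
      refine (abs_exchangeDefect_semigroup_le hij.ne hadj ht f).trans ?_
      exact le_mul_of_one_le_right (by positivity)
        (one_le_adjacencyMajorant hij.ne (by rwa [vnorm_sub_comm]))
    · rw [if_neg (fun h => hadj h.2), if_pos hij, abs_zero]
      positivity
  · rw [if_neg (fun h => hij h.1), if_neg hij, abs_zero, mul_zero]

theorem abs_semigroup_walkGenerator_sub_exclusionGenerator_le (hd : 2 ≤ d) (hx : x ∈ SSet d k)
    {t : ℝ} (ht : 0 ≤ t) (f : Conf d k →ᵇ ℝ) :
    |semigroup (walkGenerator unitConf) t f x - semigroup (exclusionGenerator d k) t f x| ≤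
      200 * (k ^ 3 * d) * (Real.log (1 + t) / (2 + t)) * ‖f‖ := by
  have hduhamel := semigroup_apply_sub_eq_integral (exclusionGenerator d k)
    (walkGenerator unitConf) t f (BoundedContinuousFunction.evalCLM ℝ x)
  simp only [BoundedContinuousFunction.evalCLM_apply] at hduhamel
  rw [abs_sub_comm, hduhamel, ← Real.norm_eq_abs]
  set K : ℝ := 100 * (k ^ 3 * d) * ‖f‖
  refine (intervalIntegral.norm_integral_le_of_norm_le ht (.of_forall fun s hs => ?_)
    ((intervalIntegrable_one_div_mul ht).const_mul K)).trans_eq ?_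
  · have hsub : 0 ≤ t - s := sub_nonneg.2 hs.2
    calc |semigroup (exclusionGenerator d k) s ((exclusionGenerator d k - walkGenerator unitConf :
          (Conf d k →ᵇ ℝ) →L[ℝ] (Conf d k →ᵇ ℝ)) (semigroup (walkGenerator unitConf) (t - s) f)) x|
        ≤ semigroup (exclusionGenerator d k) s
            ((5 / (1 + (t - s)) * ‖f‖) • adjacentPairsMajorant d k) x :=
          abs_semigroup_exclusionGenerator_apply_le (fun y hy =>
            abs_exclusionGenerator_sub_walkGenerator_semigroup_le hy hsub f) hs.1.le hx
      _ ≤ 5 / (1 + (t - s)) * ‖f‖ * (20 * (k ^ 3 * d) / (1 + s)) := by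
          rw [map_smul, BoundedContinuousFunction.smul_apply, smul_eq_mul]
          gcongr
          exact semigroup_adjacentPairsMajorant_apply_le hd hx hs.1.le
      _ = K * (1 / ((1 + s) * (1 + (t - s)))) := by
          field_simp
          ring
  · rw [intervalIntegral.integral_const_mul, integral_one_div_mul ht]
    ring

theorem rw_exclusion_comparison_general (hd : 2 ≤ d) (hx : x ∈ SSet d k) {t : ℝ} (ht : 0 ≤ t) :
    Summable (fun y => |ptrw t x y - ptl t x y|) ∧
      ∑' y, |ptrw t x y - ptl t x y| ≤ 200 * (k ^ 3 * d) * (Real.log (1 + t) / (2 + t)) := by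
  set ℓ : (Conf d k →ᵇ ℝ) →L[ℝ] ℝ := BoundedContinuousFunction.evalCLM ℝ x ∘L
    (semigroup (walkGenerator unitConf) t - semigroup (exclusionGenerator d k) t)
  have hℓ : (fun y => |ptrw t x y - ptl t x y|) = fun y => |ℓ (boundedDelta y)| :=
    funext fun y => by rw [ptrw_eq_semigroup, ptl_eq_semigroup]; rfl
  have hnorm : ‖ℓ‖ ≤ 200 * (k ^ 3 * d) * (Real.log (1 + t) / (2 + t)) := by
    have hlog : 0 ≤ Real.log (1 + t) := Real.log_nonneg (le_add_of_nonneg_right ht)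
    exact ℓ.opNorm_le_bound (by positivity)
      (abs_semigroup_walkGenerator_sub_exclusionGenerator_le hd hx ht)
  rw [hℓ]
  exact ⟨summable_abs_apply_boundedDelta ℓ, (tsum_abs_apply_boundedDelta_le ℓ).trans hnorm⟩

end Comparison

/-- Lemma (comparison between `p_t^{rw}` and `p_t^ℓ` in total variation): for integers
`d ≥ 2`, `k ≥ 1` there is a constant `C = C(k,d)` such that for every `x ∈ 𝕊^k` and `t ≥ 0`,
`Σ_{y ∈ 𝕊^k} |p_t^{rw}(x,y) − p_t^ℓ(x,y)|` is at most `C log(t+2)/(√t+1)` when `d = 2`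
and at most `C/(√t+1)` when `d ≥ 3`. -/
theorem rw_exclusion_comparison (d k : ℕ) (hd : 2 ≤ d) (hk : 1 ≤ k) :
    ∃ C : ℝ, 0 < C ∧ ∀ x : Conf d k, x ∈ SSet d k → ∀ t : ℝ, 0 ≤ t →
      Summable (fun y : SSet d k => |ptrw t x y.val - ptl t x y.val|) ∧
      (d = 2 →
        ∑' y : SSet d k, |ptrw t x y.val - ptl t x y.val| ≤
          C * Real.log (t + 2) / (Real.sqrt t + 1)) ∧
      (3 ≤ d →
        ∑' y : SSet d k, |ptrw t x y.val - ptl t x y.val| ≤ C / (Real.sqrt t + 1)) := by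
  set K : ℝ := 200 * (k ^ 3 * d)
  have hK : 0 < K := by positivity
  refine ⟨3 * K, by positivity, fun x hx t ht => ?_⟩
  obtain ⟨hsum, hle⟩ := rw_exclusion_comparison_general hd hx ht
  have hS := (hsum.tsum_subtype_le _ (SSet d k) fun _ => abs_nonneg _).trans hle
  have hlog : 0 ≤ Real.log (t + 2) := Real.log_nonneg (by linarith)
  refine ⟨hsum.subtype _, fun _ => hS.trans ?_, fun _ => hS.trans ?_⟩
  · calc K * (Real.log (1 + t) / (2 + t)) ≤ K * (Real.log (t + 2) / (Real.sqrt t + 1)) := by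
          grw [log_one_add_div_le_log_div ht]
      _ = K * Real.log (t + 2) / (Real.sqrt t + 1) := (mul_div_assoc ..).symm
      _ ≤ 3 * K * Real.log (t + 2) / (Real.sqrt t + 1) := by gcongr; linarith
  · calc K * (Real.log (1 + t) / (2 + t)) ≤ K * (3 / (Real.sqrt t + 1)) := by
          grw [log_one_add_div_le_three_div ht]
      _ = 3 * K / (Real.sqrt t + 1) := by ring

end SSEPPaper
end
end

section
/- There exist constants c, C > 0 such that: (i) for all u ∈ [0,1], c u² ≤ Φ(u) ≤ C u²; and (ii) for all u ≥ 1, Φ(u) ≥ c u. -/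
noncomputable section

/-- `Φ(u) = sup_{w ∈ ℝ} (uw − w² cosh w)`. -/
def Phi (u : ℝ) : ℝ := ⨆ w : ℝ, (u * w - w ^ 2 * Real.cosh w)

/-! Since `1 ≤ cosh w ≤ cosh R` for `|w| ≤ R`, the function `w² cosh w` lies between the parabolas
`w²` and `cosh R * w²` on `[-R, R]`, the lower one being valid everywhere. The conjugate of `w²` is
`u² / 4`, which bounds `Φ` from above. The conjugate of `cosh R * w²`, restricted to `[-R, R]`,
bounds `Φ` from below: it is quadratic as long as the maximiser `u / (2 cosh R)` stays in
`[-R, R]`, and grows linearly once the maximiser is the endpoint `± R`. -/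

open Real

variable {u w R : ℝ}

theorem mul_sub_sq_mul_cosh_le (u w : ℝ) : u * w - w ^ 2 * cosh w ≤ u ^ 2 / 4 :=
  calc
    u * w - w ^ 2 * cosh w ≤ u * w - w ^ 2 := by
      gcongr
      exact le_mul_of_one_le_right (sq_nonneg w) (one_le_cosh w)
    _ = u ^ 2 / 4 - (u / 2 - w) ^ 2 := by ring
    _ ≤ u ^ 2 / 4 := sub_le_self _ (sq_nonneg _)

theorem Phi_le_sq_div_four (u : ℝ) : Phi u ≤ u ^ 2 / 4 :=
  ciSup_le (mul_sub_sq_mul_cosh_le u)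

theorem mul_sub_sq_mul_cosh_le_Phi (u w : ℝ) : u * w - w ^ 2 * cosh w ≤ Phi u :=
  le_ciSup (f := fun w => u * w - w ^ 2 * cosh w)
    ⟨u ^ 2 / 4, Set.forall_mem_range.2 (mul_sub_sq_mul_cosh_le u)⟩ w

theorem Phi_neg (u : ℝ) : Phi (-u) = Phi u :=
  (Equiv.neg ℝ).iSup_congr fun w => by simp

theorem Phi_abs (u : ℝ) : Phi |u| = Phi u := by
  rcases abs_choice u with h | h <;> simp only [h, Phi_neg]

theorem mul_sub_cosh_mul_sq_le_Phi (u : ℝ) (hw : |w| ≤ |R|) :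
    u * w - cosh R * w ^ 2 ≤ Phi u :=
  calc
    u * w - cosh R * w ^ 2 ≤ u * w - cosh w * w ^ 2 := by
      gcongr
      exact cosh_le_cosh.2 hw
    _ = u * w - w ^ 2 * cosh w := by rw [mul_comm (cosh w)]
    _ ≤ Phi u := mul_sub_sq_mul_cosh_le_Phi u w

theorem sq_div_four_mul_cosh_le_Phi (hu : |u| ≤ 2 * R * cosh R) :
    u ^ 2 / (4 * cosh R) ≤ Phi u := by
  have hcosh : 0 < cosh R := cosh_pos R
  have hw : |u / (2 * cosh R)| ≤ |R| := by
    rw [abs_div, abs_of_pos (by positivity : 0 < 2 * cosh R), div_le_iff₀ (by positivity)]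
    nlinarith [le_abs_self R]
  calc
    u ^ 2 / (4 * cosh R) = u * (u / (2 * cosh R)) - cosh R * (u / (2 * cosh R)) ^ 2 := by
      field_simp
      ring
    _ ≤ Phi u := mul_sub_cosh_mul_sq_le_Phi u hw

theorem half_mul_abs_le_Phi (hR : 0 ≤ R) (hu : 2 * R * cosh R ≤ |u|) :
    R / 2 * |u| ≤ Phi u :=
  calc
    R / 2 * |u| = |u| * R - R / 2 * |u| := by ring
    _ ≤ |u| * R - R / 2 * (2 * R * cosh R) := by gcongr
    _ = |u| * R - R ^ 2 * cosh R := by ring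
    _ ≤ Phi |u| := mul_sub_sq_mul_cosh_le_Phi |u| R
    _ = Phi u := Phi_abs u

theorem min_sq_abs_le_Phi (u : ℝ) (hR : 0 ≤ R) :
    min (u ^ 2 / (4 * cosh R)) (R / 2 * |u|) ≤ Phi u := by
  rcases le_total |u| (2 * R * cosh R) with hu | hu
  · exact (min_le_left _ _).trans (sq_div_four_mul_cosh_le_Phi hu)
  · exact (min_le_right _ _).trans (half_mul_abs_le_Phi hR hu)

theorem Phi_bounds_general (u : ℝ) :
    (4 * cosh 1)⁻¹ * min (u ^ 2) |u| ≤ Phi u ∧ Phi u ≤ 4⁻¹ * u ^ 2 := by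
  have hconst : (4 * cosh 1)⁻¹ ≤ 1 / 2 := by
    rw [one_div]
    exact inv_anti₀ two_pos (by linarith [one_le_cosh 1])
  refine ⟨le_trans ?_ (min_sq_abs_le_Phi u zero_le_one), ?_⟩
  · rw [div_eq_inv_mul, mul_min_of_nonneg _ _ (by positivity)]
    gcongr
  · simpa only [div_eq_inv_mul] using Phi_le_sq_div_four u

/-- There are constants `c, C > 0` with `c u² ≤ Φ(u) ≤ C u²` for `u ∈ [0,1]` and
`Φ(u) ≥ c u` for `u ≥ 1`. -/
theorem Phi_bounds :
    ∃ c C : ℝ, 0 < c ∧ 0 < C ∧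
      (∀ u : ℝ, 0 ≤ u → u ≤ 1 → c * u ^ 2 ≤ Phi u ∧ Phi u ≤ C * u ^ 2) ∧
      (∀ u : ℝ, 1 ≤ u → c * u ≤ Phi u) := by
  refine ⟨(4 * cosh 1)⁻¹, 4⁻¹, by positivity, by positivity, fun u h0 h1 => ?_, fun u h1 => ?_⟩
  · simpa only [abs_of_nonneg h0, min_eq_left (pow_le_of_le_one h0 h1 two_ne_zero)]
      using Phi_bounds_general u
  · simpa only [abs_of_nonneg (zero_le_one.trans h1), min_eq_right (le_self_pow₀ h1 two_ne_zero)]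
      using (Phi_bounds_general u).1

end
end
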